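/- Let I be a nonempty subset of T and let s̃ = (s̃_{ij}) ∈ ℝ^D satisfy s̃_{ij} ≥ 0 for all 2 ≤ i < j ≤ N−2 with i,j ∈ I. If there exists i₀ ∈ I such that 1 + s̃_{1i₀} + s̃_{(N−1)i₀} + Σ_{2≤j≤N−2, j≠i₀} s̃_{i₀j} ≥ 0, then the integral Z₁(s̃;I) diverges to +∞. -/

import Mathlib

open MeasureTheory Finset

noncomputable section

instance padicMS (p : ℕ) [Fact p.Prime] : MeasurableSpace ℚ_[p] := borel _
instance padicBS (p : ℕ) [Fact p.Prime] : BorelSpace ℚ_[p] := ⟨rfl⟩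

/-- The closed unit ball of `ℚ_[p]` (i.e. `ℤ_[p]`) as a positive compact subset. -/
def padicBall (p : ℕ) [Fact p.Prime] : TopologicalSpace.PositiveCompacts ℚ_[p] where
  carrier := Metric.closedBall 0 1
  isCompact' := isCompact_closedBall 0 1
  interior_nonempty' := ⟨0, Metric.ball_subset_interior_closedBall (Metric.mem_ball_self one_pos)⟩

/-- The Haar measure on `(ℚ_[p], +)`, normalized so that `ℤ_[p]` has measure `1`. -/
def padicHaar (p : ℕ) [Fact p.Prime] : Measure ℚ_[p] :=
  Measure.addHaarMeasure (padicBall p)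

instance padicHaarSF (p : ℕ) [Fact p.Prime] : SigmaFinite (padicHaar p) := by
  unfold padicHaar; infer_instance

/-- The product of normalized Haar measures on a finite power of `ℚ_[p]`. -/
def padicPi (p : ℕ) [Fact p.Prime] (ι : Type) [Fintype ι] : Measure (ι → ℚ_[p]) :=
  Measure.pi fun _ => padicHaar p

/-- `T = {2, …, N-2}`. -/
def Tset (N : ℕ) : Finset ℕ := Finset.Icc 2 (N - 2)

/-- The ordered pairs `(i, j)` with `i < j` and `i, j ∈ A`. -/
def pairsIn (A : Finset ℕ) : Finset (ℕ × ℕ) := (A ×ˢ A).filter fun q => q.1 < q.2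

/-- The coordinates of a point of `ℚ_p^A`, as a function on `ℕ` (junk value `0` off `A`). -/
def padicCoord {p : ℕ} [Fact p.Prime] {A : Finset ℕ} (x : A → ℚ_[p]) (n : ℕ) : ℚ_[p] :=
  if h : n ∈ A then x ⟨n, h⟩ else 0

/-- The domain of integration of `Z₁(s; I)` inside `ℤ_p^{|I|}` (off the zero locus). -/
def Z1set (p : ℕ) [Fact p.Prime] (I : Finset ℕ) : Set (↥I → ℚ_[p]) :=
  {x | (∀ i, ‖x i‖ ≤ 1 ∧ x i ≠ 0) ∧
    ∀ q ∈ pairsIn I, padicCoord x q.1 ≠ padicCoord x q.2}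

/-!
Put `e i = -(2 + s̃_{1i} + s̃_{(N-1)i} + Σ_j s̃_{ij})`, so that the hypothesis says
`e i₀ ≤ -1`. Near a point `c` of `ℤ_p^I` with distinct coordinates and `c i₀ = 0`, every factor of
the integrand other than `|x_{i₀}|^{e i₀}` is continuous and nonzero, hence bounded below by
a positive constant. So `Z₁` is at least a positive multiple of `∫_U |t|^{e i₀} dt` for a
neighbourhood `U` of `0` in `ℚ_p`. This one-variable integral is infinite: over the ball of
radius `p⁻ᵏ`, whose measure is at least `p⁻ᵏ`, it is at least `p⁻ᵏ · (p⁻ᵏ)⁻¹ = 1`, whereas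
the integrals of a locally integrable function over balls shrinking to a null point tend
to `0`.
-/

open Filter Metric
open scoped Topology ENNReal

section Neighbourhoods

theorem setLIntegral_eq_top_of_forall_mem_nhds_le {X : Type*} [PseudoEMetricSpace X]
    [MeasurableSpace X] [BorelSpace X] {μ : Measure X} {x : X} (hx : μ {x} = 0) {f : X → ℝ≥0∞}
    {ε : ℝ≥0∞} (hε : ε ≠ 0) (hf : ∀ U ∈ 𝓝 x, ε ≤ ∫⁻ t in U, f t ∂μ) {V : Set X} (hV : V ∈ 𝓝 x) :
    ∫⁻ t in V, f t ∂μ = ⊤ := by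
  by_contra hfin
  let ν := (μ.restrict V).withDensity f
  have : IsFiniteMeasure ν := isFiniteMeasure_withDensity hfin
  have hνx : ν {x} = 0 :=
    ((withDensity_absolutelyContinuous _ _).trans
      Measure.restrict_le_self.absolutelyContinuous) hx
  obtain ⟨U, hxU, hU, hνU⟩ := Set.exists_isOpen_lt_of_lt {x} ε (hνx ▸ pos_iff_ne_zero.2 hε)
  have hUV : U ∩ V ∈ 𝓝 x := inter_mem (hU.mem_nhds (hxU rfl)) hV
  refine hνU.not_ge ?_
  rw [withDensity_apply f hU.measurableSet, Measure.restrict_restrict hU.measurableSet]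
  exact hf _ hUV

theorem eventually_norm_le {E : Type*} [SeminormedAddGroup E] [IsUltrametricDist E] {z : E}
    {r : ℝ} (hr : r ≠ 0) (hz : ‖z‖ ≤ r) : ∀ᶠ y in 𝓝 z, ‖y‖ ≤ r := by
  simp only [← mem_closedBall_zero_iff] at hz ⊢
  exact (IsUltrametricDist.isOpen_closedBall 0 hr).eventually_mem hz

variable {ι : Type*} [Fintype ι] {X : ι → Type*} [∀ i, MeasurableSpace (X i)]
  (μ : ∀ i, Measure (X i)) [∀ i, SigmaFinite (μ i)]

theorem le_setLIntegral_univ_pi_comp_eval [DecidableEq ι] (s : ∀ i, Set (X i)) (i : ι)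
    (f : X i → ℝ≥0∞) :
    (∏ j ∈ univ.erase i, μ j (s j)) * ∫⁻ t in s i, f t ∂μ i ≤
      ∫⁻ x in Set.univ.pi s, f (x i) ∂Measure.pi μ := by
  have h := lintegral_map_le (μ := Measure.pi fun j => (μ j).restrict (s j)) f (Function.eval i)
  simpa [Measure.pi_map_eval, Measure.restrict_pi_pi] using h

theorem setLIntegral_comp_eval_eq_top [∀ i, TopologicalSpace (X i)]
    [∀ i, (μ i).IsOpenPosMeasure] {c : ∀ i, X i} {i : ι} {f : X i → ℝ≥0∞}
    (hf : ∀ U ∈ 𝓝 (c i), ∫⁻ t in U, f t ∂μ i = ⊤) {V : Set (∀ i, X i)} (hV : V ∈ 𝓝 c) :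
    ∫⁻ x in V, f (x i) ∂Measure.pi μ = ⊤ := by
  classical
  rw [nhds_pi, Filter.mem_pi'] at hV
  obtain ⟨J, s, hs, hsV⟩ := hV
  have hpos : ∏ j ∈ univ.erase i, μ j (s j) ≠ 0 :=
    prod_ne_zero_iff.2 fun j _ => ((μ j).measure_pos_of_mem_nhds (hs j)).ne'
  refine top_unique ?_
  calc ⊤ = (∏ j ∈ univ.erase i, μ j (s j)) * ∫⁻ t in s i, f t ∂μ i := by
        rw [hf _ (hs i), ENNReal.mul_top hpos]
    _ ≤ ∫⁻ x in Set.univ.pi s, f (x i) ∂Measure.pi μ := le_setLIntegral_univ_pi_comp_eval μ s i f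
    _ ≤ ∫⁻ x in V, f (x i) ∂Measure.pi μ :=
        lintegral_mono_set ((Set.pi_mono' (fun _ _ => subset_rfl) (Set.subset_univ _)).trans hsV)

end Neighbourhoods

section Padic

variable {p : ℕ} [Fact p.Prime]

theorem padic_closedBall_subset_biUnion_closedBall_natCast (k : ℕ) :
    closedBall (0 : ℚ_[p]) 1 ⊆ ⋃ n ∈ range (p ^ k), closedBall (n : ℚ_[p]) ((p : ℝ)⁻¹ ^ k) := by
  intro x hx
  let z : ℤ_[p] := ⟨x, mem_closedBall_zero_iff.1 hx⟩
  have hz : ‖z - z.appr k‖ ≤ (p : ℝ) ^ (-k : ℤ) :=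
    (PadicInt.norm_le_pow_iff_mem_span_pow _ k).2 (PadicInt.appr_spec k z)
  rw [PadicInt.norm_def, PadicInt.coe_sub, PadicInt.coe_natCast, zpow_neg, zpow_natCast,
    ← inv_pow] at hz
  exact Set.mem_biUnion (mem_range.2 (z.appr_lt k)) (mem_closedBall_iff_norm.2 hz)

variable (μ : Measure ℚ_[p]) [μ.IsAddHaarMeasure]

theorem padic_measure_closedBall_one_le (k : ℕ) :
    μ (closedBall 0 1) ≤ (p : ℝ≥0∞) ^ k * μ (closedBall 0 ((p : ℝ)⁻¹ ^ k)) :=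
  calc μ (closedBall 0 1)
      ≤ ∑ n ∈ range (p ^ k), μ (closedBall (n : ℚ_[p]) ((p : ℝ)⁻¹ ^ k)) :=
        (measure_mono (padic_closedBall_subset_biUnion_closedBall_natCast k)).trans
          (measure_biUnion_finset_le _ _)
    _ = (p : ℝ≥0∞) ^ k * μ (closedBall 0 ((p : ℝ)⁻¹ ^ k)) := by
        simp [Measure.addHaar_closedBall_center]

variable {e : ℝ}

theorem padic_measure_closedBall_one_le_setLIntegral_norm_rpow (he : e ≤ -1) (k : ℕ) :
    μ (closedBall 0 1) ≤
      ∫⁻ t in closedBall 0 ((p : ℝ)⁻¹ ^ k), ENNReal.ofReal (‖t‖ ^ e) ∂μ := by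
  have hp : 1 < (p : ℝ) := mod_cast (Fact.out : p.Prime).one_lt
  set r : ℝ := (p : ℝ)⁻¹ ^ k with hr
  have hr0 : 0 < r := by positivity
  have hr1 : r ≤ 1 := pow_le_one₀ (by positivity) (inv_le_one_of_one_le₀ hp.le)
  have hpk : (p : ℝ≥0∞) ^ k ≤ ENNReal.ofReal (r ^ e) := by
    have h : (p : ℝ) ^ k ≤ r ^ e :=
      calc (p : ℝ) ^ k = r ^ (-1 : ℝ) := by rw [Real.rpow_neg_one, hr, inv_pow, inv_inv]
        _ ≤ r ^ e := Real.rpow_le_rpow_of_exponent_ge hr0 hr1 he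
    simpa [ENNReal.ofReal_pow] using ENNReal.ofReal_le_ofReal h
  calc μ (closedBall 0 1) ≤ (p : ℝ≥0∞) ^ k * μ (closedBall 0 r) :=
        padic_measure_closedBall_one_le μ k
    _ ≤ ENNReal.ofReal (r ^ e) * μ (closedBall 0 r) := by gcongr
    _ = ∫⁻ _ in closedBall 0 r, ENNReal.ofReal (r ^ e) ∂μ := (setLIntegral_const _ _).symm
    _ ≤ ∫⁻ t in closedBall 0 r, ENNReal.ofReal (‖t‖ ^ e) ∂μ := by
        refine setLIntegral_mono_ae' isClosed_closedBall.measurableSet ?_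
        -- The pointwise bound fails at `t = 0`, where `0 ^ e = 0`.
        filter_upwards [compl_mem_ae_iff.2 (measure_singleton (0 : ℚ_[p]))] with t ht htr
        exact ENNReal.ofReal_le_ofReal <| Real.rpow_le_rpow_of_nonpos (norm_pos_iff.2 ht)
          (mem_closedBall_zero_iff.1 htr) (by linarith)

theorem padic_setLIntegral_norm_rpow_eq_top (he : e ≤ -1) {U : Set ℚ_[p]} (hU : U ∈ 𝓝 0) :
    ∫⁻ t in U, ENNReal.ofReal (‖t‖ ^ e) ∂μ = ⊤ := by
  have hp : 1 < (p : ℝ) := mod_cast (Fact.out : p.Prime).one_lt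
  refine setLIntegral_eq_top_of_forall_mem_nhds_le (measure_singleton 0)
    (measure_closedBall_pos μ 0 one_pos).ne' (fun W hW => ?_) hU
  obtain ⟨k, -, hk⟩ := (nhds_basis_closedBall_pow (by positivity)
    (inv_lt_one_of_one_lt₀ hp)).mem_iff.1 hW
  exact (padic_measure_closedBall_one_le_setLIntegral_norm_rpow μ he k).trans
    (lintegral_mono_set hk)

end Padic

section Configurations

variable {p : ℕ} [Fact p.Prime] {I : Finset ℕ}

instance padicHaar_isAddHaarMeasure : (padicHaar p).IsAddHaarMeasure := by
  unfold padicHaar; infer_instance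

theorem padicPi_setLIntegral_norm_rpow_eq_top {ι : Type} [Fintype ι] {e : ℝ} (he : e ≤ -1)
    {c : ι → ℚ_[p]} {i : ι} (hci : c i = 0) {V : Set (ι → ℚ_[p])} (hV : V ∈ 𝓝 c) :
    ∫⁻ x in V, ENNReal.ofReal (‖x i‖ ^ e) ∂padicPi p ι = ⊤ :=
  setLIntegral_comp_eval_eq_top (X := fun _ => ℚ_[p]) (f := fun t => ENNReal.ofReal (‖t‖ ^ e)) _
    (fun _ hU => padic_setLIntegral_norm_rpow_eq_top _ he (hci ▸ hU)) hV

theorem exists_injective_apply_eq_zero_norm_le_one (i₀ : I) :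
    ∃ c : I → ℚ_[p], Function.Injective c ∧ c i₀ = 0 ∧ ∀ i, ‖c i‖ ≤ 1 :=
  ⟨fun i => ((i - i₀ : ℤ) : ℚ_[p]),
    Int.cast_injective.comp <| sub_left_injective.comp <|
      Nat.cast_injective.comp Subtype.val_injective,
    by simp, fun _ => Padic.norm_int_le_one _⟩

theorem padicCoord_of_mem (x : I → ℚ_[p]) {n : ℕ} (hn : n ∈ I) : padicCoord x n = x ⟨n, hn⟩ :=
  dif_pos hn

@[fun_prop]
theorem continuous_padicCoord (n : ℕ) : Continuous fun x : I → ℚ_[p] => padicCoord x n := by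
  unfold padicCoord
  split_ifs <;> fun_prop

theorem padicCoord_sub_ne_zero {c : I → ℚ_[p]} (hc : Function.Injective c) {q : ℕ × ℕ}
    (hq : q ∈ pairsIn I) : padicCoord c q.1 - padicCoord c q.2 ≠ 0 := by
  simp only [pairsIn, mem_filter, mem_product] at hq
  obtain ⟨⟨h₁, h₂⟩, hlt⟩ := hq
  rw [padicCoord_of_mem c h₁, padicCoord_of_mem c h₂, sub_ne_zero]
  exact hc.ne fun h => hlt.ne (congrArg Subtype.val h)

theorem padicCoord_ne_zero {c : I → ℚ_[p]} (hc : Function.Injective c) {i₀ : I} (hc₀ : c i₀ = 0)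
    {i : ℕ} (hi : i ∈ I.erase ↑i₀) : padicCoord c i ≠ 0 := by
  rw [padicCoord_of_mem c (mem_of_mem_erase hi), ← hc₀]
  exact hc.ne fun h => ne_of_mem_erase hi (congrArg Subtype.val h)

theorem eventually_mem_Z1set {c : I → ℚ_[p]} (hc : Function.Injective c) {i₀ : I}
    (hc₀ : c i₀ = 0) (hc₁ : ∀ i, ‖c i‖ ≤ 1) : ∀ᶠ x in 𝓝 c, x i₀ ≠ 0 → x ∈ Z1set p I := by
  have hball : ∀ᶠ x in 𝓝 c, ∀ i, ‖x i‖ ≤ 1 := eventually_all.2 fun i =>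
    (continuous_apply i).continuousAt.eventually (eventually_norm_le one_ne_zero (hc₁ i))
  have hne : ∀ᶠ x in 𝓝 c, ∀ i, i ≠ i₀ → x i ≠ 0 := eventually_all.2 fun i =>
    eventually_imp_distrib_left.2 fun hi =>
      (continuous_apply i).continuousAt.eventually_ne (hc₀ ▸ hc.ne hi)
  have hsub : ∀ᶠ x in 𝓝 c, ∀ q ∈ pairsIn I, padicCoord x q.1 - padicCoord x q.2 ≠ 0 :=
    (eventually_all_finset _).2 fun q hq => ContinuousAt.eventually_ne
      (by fun_prop) (padicCoord_sub_ne_zero hc hq)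
  filter_upwards [hball, hne, hsub] with x hball hne hsub hx₀
  refine ⟨fun i => ⟨hball i, ?_⟩, fun q hq => sub_ne_zero.1 (hsub q hq)⟩
  rcases eq_or_ne i i₀ with rfl | hi
  exacts [hx₀, hne i hi]

/-- The product of all factors of the integrand of `Z₁`, with arbitrary exponents `a` on the
differences and `e` on the coordinates, except the factor `|x_{i₀}|^{e i₀}`. -/
def Z1cofactor (a : ℕ × ℕ → ℝ) (e : ℕ → ℝ) (i₀ : ℕ) (x : I → ℚ_[p]) : ℝ :=
  (∏ q ∈ pairsIn I, ‖padicCoord x q.1 - padicCoord x q.2‖ ^ a q) *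
    ∏ i ∈ I.erase i₀, ‖padicCoord x i‖ ^ e i

variable (a : ℕ × ℕ → ℝ) (e : ℕ → ℝ)

theorem Z1cofactor_mul_norm_rpow (i₀ : I) (x : I → ℚ_[p]) :
    Z1cofactor a e i₀ x * ‖x i₀‖ ^ e i₀ =
      (∏ q ∈ pairsIn I, ‖padicCoord x q.1 - padicCoord x q.2‖ ^ a q) *
        ∏ i ∈ I, ‖padicCoord x i‖ ^ e i := by
  rw [Z1cofactor, mul_assoc, ← prod_erase_mul I _ i₀.2, padicCoord_of_mem x i₀.2]

theorem Z1cofactor_pos {c : I → ℚ_[p]} (hc : Function.Injective c) {i₀ : I} (hc₀ : c i₀ = 0) :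
    0 < Z1cofactor a e i₀ c :=
  mul_pos
    (prod_pos fun _ hq => Real.rpow_pos_of_pos (norm_pos_iff.2 (padicCoord_sub_ne_zero hc hq)) _)
    (prod_pos fun _ hi => Real.rpow_pos_of_pos (norm_pos_iff.2 (padicCoord_ne_zero hc hc₀ hi)) _)

theorem continuousAt_Z1cofactor {c : I → ℚ_[p]} (hc : Function.Injective c) {i₀ : I}
    (hc₀ : c i₀ = 0) : ContinuousAt (Z1cofactor a e i₀) c := by
  refine ContinuousAt.mul (tendsto_finsetProd _ fun q hq => ?_)
    (tendsto_finsetProd _ fun i hi => ?_)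
  · exact ContinuousAt.rpow_const (by fun_prop)
      (.inl (norm_ne_zero_iff.2 (padicCoord_sub_ne_zero hc hq)))
  · exact ContinuousAt.rpow_const (by fun_prop)
      (.inl (norm_ne_zero_iff.2 (padicCoord_ne_zero hc hc₀ hi)))

end Configurations

theorem Z1_diverges_general (p : ℕ) [Fact p.Prime] {I : Finset ℕ} (a : ℕ × ℕ → ℝ) (e : ℕ → ℝ)
    {i₀ : ℕ} (hi₀ : i₀ ∈ I) (he : e i₀ ≤ -1) :
    ∫⁻ x in Z1set p I,
      ENNReal.ofReal
        ((∏ q ∈ pairsIn I, ‖padicCoord x q.1 - padicCoord x q.2‖ ^ a q) *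
          ∏ i ∈ I, ‖padicCoord x i‖ ^ e i)
      ∂(padicPi p ↥I) = ⊤ := by
  lift i₀ to I using hi₀
  obtain ⟨c, hc, hc₀, hc₁⟩ := exists_injective_apply_eq_zero_norm_le_one (p := p) i₀
  obtain ⟨m, hm, hmc⟩ := exists_between (Z1cofactor_pos a e hc hc₀)
  obtain ⟨V, hV, hVo, hcV⟩ := _root_.mem_nhds_iff.1 <| (eventually_mem_Z1set hc hc₀ hc₁).and <|
    (continuousAt_Z1cofactor a e hc hc₀).eventually_const_lt hmc
  have hVZ : V ≤ᵐ[padicPi p I] Z1set p I := by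
    filter_upwards [Measure.ae_eval_ne (fun _ => padicHaar p) i₀ 0] with x hx hxV
    exact (hV hxV).1 hx
  refine top_unique ?_
  calc (⊤ : ℝ≥0∞) = ENNReal.ofReal m * ∫⁻ x in V, ENNReal.ofReal (‖x i₀‖ ^ e i₀) ∂padicPi p I := by
        rw [padicPi_setLIntegral_norm_rpow_eq_top he hc₀ (hVo.mem_nhds hcV),
          ENNReal.mul_top (ENNReal.ofReal_pos.2 hm).ne']
    _ = ∫⁻ x in V, ENNReal.ofReal (m * ‖x i₀‖ ^ e i₀) ∂padicPi p I := by
        simp only [ENNReal.ofReal_mul hm.le, lintegral_const_mul' _ _ ENNReal.ofReal_ne_top]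
    _ ≤ ∫⁻ x in V, ENNReal.ofReal (Z1cofactor a e i₀ x * ‖x i₀‖ ^ e i₀) ∂padicPi p I := by
        refine setLIntegral_mono' hVo.measurableSet fun x hx => ?_
        gcongr
        exact (hV hx).2.le
    _ ≤ ∫⁻ x in Z1set p I, ENNReal.ofReal (Z1cofactor a e i₀ x * ‖x i₀‖ ^ e i₀) ∂padicPi p I :=
        lintegral_mono' (Measure.restrict_mono_ae hVZ) le_rfl
    _ = _ := by simp only [Z1cofactor_mul_norm_rpow]

/-- If `s̃_{ij} ≥ 0` for `i, j ∈ I` and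
`1 + s̃_{1i₀} + s̃_{(N-1)i₀} + Σ_{j ≠ i₀} s̃_{i₀j} ≥ 0` for some `i₀ ∈ I`, then
`Z₁(s̃; I)` diverges to `+∞`. -/
theorem Z1_diverges (p : ℕ) [Fact p.Prime] (N : ℕ) (hN : 4 ≤ N)
    (I : Finset ℕ) (hIT : I ⊆ Tset N) (hI : I.Nonempty)
    (s : ℕ → ℕ → ℝ) (hsym : ∀ i j, s i j = s j i)
    (hpos : ∀ q ∈ pairsIn I, 0 ≤ s q.1 q.2)
    (i₀ : ℕ) (hi₀ : i₀ ∈ I)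
    (hdiv : 0 ≤ 1 + s 1 i₀ + s (N - 1) i₀ + ∑ j ∈ (Tset N).erase i₀, s i₀ j) :
    ∫⁻ x in Z1set p I,
      ENNReal.ofReal
        ((∏ q ∈ pairsIn I, ‖padicCoord x q.1 - padicCoord x q.2‖ ^ s q.1 q.2) *
          ∏ i ∈ I, ‖padicCoord x i‖ ^
            (-(2 + s 1 i + s (N - 1) i + ∑ j ∈ (Tset N).erase i, s i j)))
      ∂(padicPi p ↥I) = ⊤ :=
  Z1_diverges_general p (fun q => s q.1 q.2) _ hi₀ (by linarith)
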